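/- Let κ > 0 and ζ > 0, let w₀(x) := −(2κ/π)·arctan(x/ζ), and set r₀ := −L ∘ w₀', i.e. r₀(x) = (1/2)(ξ(x)·√(1 + ξ(x)²) + arcsinh(ξ(x))) with ξ(x) := 2κζ/(π(x² + ζ²)). Then r₀ is even, r₀(x) > 0 for every x ∈ ℝ, r₀ is strictly decreasing on (0, ∞), and r₀(x) → 0 as x → +∞. Consequently, for every α > 0 the shock-formation conditions hold at α: r₀'(α)·(r₀(α) + r₀(+∞)) < 0, r₀'(x)·r₀(α) < 0 for every x ≥ α, and r₀(+∞) = 0, where r₀(+∞) := lim_{x→+∞} r₀(x). -/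

import Mathlib

open Real Set Filter MeasureTheory

noncomputable section

/-- `L(u) = (1/2)(u·√(1+u²) + arcsinh u)`, the antiderivative of `Q(ξ) = √(1+ξ²)` with `L 0 = 0`. -/
def Lfun (u : ℝ) : ℝ := (1/2) * (u * Real.sqrt (1 + u^2) + Real.arsinh u)

/-- `û₁(η) = L⁻¹(−η/2)`. -/
def u1hat (η : ℝ) : ℝ := Function.invFun Lfun (-η/2)

/-- `k(η) = √(1 + û₁(η)²)`. -/
def kfun (η : ℝ) : ℝ := Real.sqrt (1 + (u1hat η)^2)

/-- `f(η) = k'(η)/√(k(η))`. -/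
def ffun (η : ℝ) : ℝ := deriv kfun η / Real.sqrt (kfun η)

/-- `A(t) = exp(λ t / 2)`. -/
def Afun (lam t : ℝ) : ℝ := Real.exp (lam * t / 2)

theorem Lfun_hasDerivAt (u : ℝ) : HasDerivAt Lfun (Real.sqrt (1 + u^2)) u := by
  have hp : 0 < 1 + u^2 := by positivity
  have hs : 0 < Real.sqrt (1 + u^2) := Real.sqrt_pos.mpr hp
  have hsq : Real.sqrt (1 + u^2) ^ 2 = 1 + u^2 := Real.sq_sqrt hp.le
  have h1 : HasDerivAt (fun u : ℝ => 1 + u^2) (2 * u) u := by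
    simpa using ((hasDerivAt_id u).pow 2).const_add 1
  have h2 := h1.sqrt hp.ne'
  have h3 := (((hasDerivAt_id u).mul h2).add (Real.hasDerivAt_arsinh u)).const_mul (1/2)
  refine h3.congr_deriv ?_
  simp only [id]
  field_simp
  rw [hsq]
  ring

theorem Lfun_strictMono : StrictMono Lfun := by
  apply strictMono_of_deriv_pos
  intro u
  rw [(Lfun_hasDerivAt u).deriv]
  positivity

theorem Lfun_neg (u : ℝ) : Lfun (-u) = - Lfun u := by
  simp only [Lfun, Real.arsinh_neg, neg_sq]
  ring

theorem Lfun_zero : Lfun 0 = 0 := by simp [Lfun]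

/-- for the kink initial profile `w₀(x) = −(2κ/π)·arctan(x/ζ)`, the
initial Riemann function `r₀ = −L ∘ w₀'` is even, positive, strictly decreasing on
`(0,∞)`, tends to `0` at `+∞`, and satisfies the shock-formation conditions at
every `α > 0`. -/
theorem kink_profile_shock_conditions
    (κ ζ : ℝ) (hκ : 0 < κ) (hζ : 0 < ζ)
    (w₀ r₀ : ℝ → ℝ)
    (hw₀ : ∀ x : ℝ, w₀ x = -(2*κ/Real.pi) * Real.arctan (x/ζ))
    (hr₀ : ∀ x : ℝ, r₀ x = -Lfun (deriv w₀ x)) :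
    (∀ x : ℝ, r₀ x = (1/2) * (2*κ*ζ/(Real.pi*(x^2+ζ^2)) *
        Real.sqrt (1 + (2*κ*ζ/(Real.pi*(x^2+ζ^2)))^2)
        + Real.arsinh (2*κ*ζ/(Real.pi*(x^2+ζ^2))))) ∧
    (∀ x : ℝ, r₀ (-x) = r₀ x) ∧
    (∀ x : ℝ, 0 < r₀ x) ∧
    StrictAntiOn r₀ (Set.Ioi 0) ∧
    Filter.Tendsto r₀ Filter.atTop (nhds 0) ∧
    (∀ α : ℝ, 0 < α →
      deriv r₀ α * (r₀ α + 0) < 0 ∧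
      (∀ x : ℝ, α ≤ x → deriv r₀ x * r₀ α < 0)) := by
  have hpi := Real.pi_pos
  obtain ⟨ξ, hξ⟩ : ∃ ξ : ℝ → ℝ, ∀ x, ξ x = 2*κ*ζ/(Real.pi*(x^2+ζ^2)) := ⟨_, fun _ => rfl⟩
  have hd : ∀ x, deriv w₀ x = -ξ x := by
    intro x
    have e : w₀ = fun x => -(2*κ/Real.pi) * Real.arctan (x/ζ) := funext hw₀
    have h := (((hasDerivAt_id x).div_const ζ).arctan).const_mul (-(2*κ/Real.pi))
    simp only [id] at h
    rw [e, h.deriv, hξ]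
    have : 0 < x^2 + ζ^2 := by positivity
    have : 0 < 1 + (x/ζ)^2 := by positivity
    field_simp
    ring
  have hr : ∀ x, r₀ x = Lfun (ξ x) := by
    intro x
    rw [hr₀, hd, Lfun_neg, neg_neg]
  have hre : r₀ = Lfun ∘ ξ := funext hr
  have hξpos : ∀ x, 0 < ξ x := by
    intro x
    rw [hξ]
    positivity
  have hpos : ∀ x, 0 < r₀ x := by
    intro x
    rw [hr, ← Lfun_zero]
    exact Lfun_strictMono (hξpos x)
  have hder : ∀ x, 0 < x → deriv r₀ x < 0 := by
    intro x hx
    have hD : 0 < Real.pi*(x^2+ζ^2) := by positivity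
    have h1 : HasDerivAt (fun x : ℝ => Real.pi*(x^2+ζ^2)) (Real.pi*(2*x)) x := by
      simpa using (((hasDerivAt_id x).pow 2).add_const (ζ^2)).const_mul Real.pi
    have h2 := (hasDerivAt_const x (2*κ*ζ)).div h1 hD.ne'
    have h3 : HasDerivAt ξ _ x := h2.congr_of_eventuallyEq (Eventually.of_forall hξ)
    have h4 := (Lfun_hasDerivAt (ξ x)).comp x h3
    rw [hre, h4.deriv]
    apply mul_neg_of_pos_of_neg
    · positivity
    · apply div_neg_of_neg_of_pos
      · have : 0 < 2*κ*ζ*(Real.pi*(2*x)) := by positivity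
        linarith
      · positivity
  refine ⟨?_, ?_, hpos, ?_, ?_, ?_⟩
  · intro x
    rw [hr, hξ, Lfun]
  · intro x
    rw [hr, hr, hξ, hξ, neg_sq]
  · intro x hx y hy hxy
    rw [hr, hr]
    apply Lfun_strictMono
    rw [hξ, hξ]
    have hx : 0 < x := hx
    gcongr
  · have hc : Tendsto Lfun (nhds 0) (nhds 0) := by
      simpa [Lfun_zero] using (Lfun_hasDerivAt 0).continuousAt.tendsto
    rw [hre]
    refine hc.comp ?_
    rw [show ξ = fun x => 2*κ*ζ/(Real.pi*(x^2+ζ^2)) from funext hξ]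
    apply Tendsto.const_div_atTop
    apply Tendsto.const_mul_atTop hpi
    exact tendsto_atTop_add_const_right _ _ (tendsto_pow_atTop (by norm_num))
  · intro α hα
    refine ⟨?_, ?_⟩
    · rw [add_zero]
      exact mul_neg_of_neg_of_pos (hder α hα) (hpos α)
    · intro x hx
      exact mul_neg_of_neg_of_pos (hder x (hα.trans_le hx)) (hpos α)
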